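/- First fundamental theorem of FC for the general fractional derivative of Caputo type: let (κ, k) ∈ L₁ and f ∈ C_{-1,(k)}(0,∞), i.e. f = k * φ for some φ ∈ C_{-1}(0,∞). Then ( *D_{(k)} I_{(κ)} f)(t) = f(t) for all t > 0; explicitly, the function g = κ * f has a finite limit g(0) := lim_{s→0+} g(s), k * g is differentiable on (0,∞), and d/dt (k * g)(t) − g(0) k(t) = f(t) for all t > 0. -/

import Mathlib

open Real Filter MeasureTheory intervalIntegral

/-- The Laplace convolution `(f * g)(t) = ∫_0^t f(t-τ) g(τ) dτ`. -/
noncomputable def lconv (f g : ℝ → ℝ) : ℝ → ℝ :=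
  fun t => ∫ τ in (0:ℝ)..t, f (t - τ) * g τ

/-- The space `C_{-1}(0,∞)`: functions representable as `t^p f₁(t)` with `p > -1`
and `f₁` continuous on `[0,∞)`. -/
def CMinusOne (f : ℝ → ℝ) : Prop :=
  ∃ p : ℝ, p > -1 ∧ ∃ f₁ : ℝ → ℝ, ContinuousOn f₁ (Set.Ici 0) ∧
    ∀ t > (0:ℝ), f t = t ^ p * f₁ t


/-- The class `L₁` of Sonin kernel pairs: `κ, k ∈ C_{-1}(0,∞)` with `(κ * k)(t) = 1`
for all `t > 0`. -/
def SoninPair (κ k : ℝ → ℝ) : Prop :=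
  CMinusOne κ ∧ CMinusOne k ∧ ∀ t > (0:ℝ), lconv κ k t = 1

/-!
On `C_{-1}(0,∞)` the Laplace convolution is commutative and associative, so a Sonin pair satisfies
`κ * (k * φ) = 1 * φ = ∫ φ`. Applied to `(κ, k)` and `φ`, this identifies `g = κ * f` with a
primitive of `φ`, whence `g(0) = 0`. The same identity for the pair `(k, κ)` and `f` gives
`k * g = ∫ f`, and `f` is continuous on `(0,∞)` because `C_{-1}(0,∞)` is closed under convolution.
-/

section Primitive

open Set Topology

variable {E : Type*} [NormedAddCommGroup E] [NormedSpace ℝ E] {a b : ℝ}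

theorem tendsto_integral_nhdsGT {f : ℝ → E} {μ : Measure ℝ} [NullSingletonClass μ]
    (hf : IntervalIntegrable f μ a b) (hab : a < b) :
    Tendsto (fun s ↦ ∫ x in a..s, f x ∂μ) (𝓝[>] a) (𝓝 0) := by
  have h := continuousOn_primitive_interval' hf left_mem_uIcc a left_mem_uIcc
  rw [ContinuousWithinAt, integral_same, uIcc_of_le hab.le] at h
  rw [← nhdsWithin_Ioc_eq_nhdsGT hab]
  exact h.mono_left (nhdsWithin_mono a Ioc_subset_Icc_self)

theorem continuous_integral_smul_of_intervalIntegrable {X : Type*} [TopologicalSpace X]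
    [FirstCountableTopology X] [WeaklyLocallyCompactSpace X] {μ : Measure ℝ} {w : ℝ → ℝ}
    {F : X → ℝ → E} (hw : IntervalIntegrable w μ a b) (hF : Continuous F.uncurry) :
    Continuous fun x ↦ ∫ u in a..b, w u • F x u ∂μ := by
  refine continuous_iff_continuousAt.2 fun x₀ ↦ ?_
  obtain ⟨K, hK, hK_nhds⟩ := exists_compact_mem_nhds x₀
  obtain ⟨C, hC⟩ := (hK.prod isCompact_uIcc).exists_bound_of_continuousOn
    (s := K ×ˢ uIcc a b) hF.continuousOn
  refine continuousAt_of_dominated_interval (bound := fun u ↦ ‖w u‖ * C) ?_ ?_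
    (hw.norm.mul_const C) ?_
  · refine Eventually.of_forall fun x ↦ ?_
    have hFx : Continuous (F x) := hF.comp (Continuous.prodMk_right x)
    exact (hw.smul_continuousOn hFx.continuousOn).def'.aestronglyMeasurable
  · filter_upwards [hK_nhds] with x hx
    refine Eventually.of_forall fun u hu ↦ ?_
    rw [norm_smul]
    exact mul_le_mul_of_nonneg_left (hC (x, u) ⟨hx, uIoc_subset_uIcc hu⟩) (norm_nonneg _)
  · exact Eventually.of_forall fun u _ ↦
      (continuous_const.smul (hF.comp (Continuous.prodMk_left u))).continuousAt

end Primitive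

section Convolution

open Set

variable {f f' g g' h κ k : ℝ → ℝ} {t : ℝ}

theorem lconv_comm (f g : ℝ → ℝ) : lconv f g = lconv g f := by
  funext t
  have reflect := integral_comp_sub_left (a := 0) (b := t) (fun τ ↦ g (t - τ) * f τ) t
  simp only [sub_self, sub_zero, sub_sub_cancel] at reflect
  simp only [lconv]
  rw [← reflect]
  simp only [mul_comm]

theorem lconv_congr (hf : EqOn f f' (Ioi 0)) (hg : EqOn g g' (Ioi 0)) :
    EqOn (lconv f g) (lconv f' g') (Ioi 0) := fun t ht ↦
  integral_congr_Ioo_of_le (le_of_lt ht) fun τ hτ ↦ by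
    simp only [hf (sub_pos.2 hτ.2), hg hτ.1]

theorem lconv_one_left (f : ℝ → ℝ) (t : ℝ) : lconv 1 f t = ∫ τ in (0 : ℝ)..t, f τ := by
  simp only [lconv, Pi.one_apply, one_mul]

theorem lconv_eq_mul_integral_zero_one (f g : ℝ → ℝ) (t : ℝ) :
    lconv f g t = t * ∫ u in (0 : ℝ)..1, f (t * (1 - u)) * g (t * u) := by
  have rescale := mul_integral_comp_mul_left (a := 0) (b := 1)
    (f := fun τ ↦ f (t - τ) * g τ) (c := t)
  rw [mul_zero, mul_one] at rescale
  simp only [lconv, ← rescale, mul_sub, mul_one]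

theorem intervalIntegrable_comp_sub_mul_half (hf : ContinuousOn f (Ioi 0)) (ht : 0 < t)
    (hg : IntervalIntegrable g volume 0 (t / 2)) :
    IntervalIntegrable (fun τ ↦ f (t - τ) * g τ) volume 0 (t / 2) := by
  refine hg.continuousOn_mul (hf.comp (by fun_prop) fun τ hτ ↦ ?_)
  rw [uIcc_of_le (by linarith)] at hτ
  exact mem_Ioi.2 (by linarith [hτ.2])

namespace CMinusOne

theorem congr (hf : CMinusOne f) (hfg : EqOn g f (Ioi 0)) : CMinusOne g := by
  obtain ⟨p, hp, f₁, hf₁, hf_eq⟩ := hf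
  exact ⟨p, hp, f₁, hf₁, fun t ht ↦ (hfg ht).trans (hf_eq t ht)⟩

theorem norm (hf : CMinusOne f) : CMinusOne fun t ↦ ‖f t‖ := by
  obtain ⟨p, hp, f₁, hf₁, hf_eq⟩ := hf
  refine ⟨p, hp, fun t ↦ ‖f₁ t‖, hf₁.norm, fun t ht ↦ ?_⟩
  simp only [hf_eq t ht, norm_mul, norm_of_nonneg (rpow_nonneg (le_of_lt ht) p)]

theorem rpow {p : ℝ} (hp : -1 < p) : CMinusOne fun t : ℝ ↦ t ^ p :=
  ⟨p, hp, 1, continuousOn_const, fun t _ ↦ by rw [Pi.one_apply, mul_one]⟩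

theorem exists_continuous (hf : CMinusOne f) :
    ∃ p > (-1 : ℝ), ∃ f₁ : ℝ → ℝ, Continuous f₁ ∧ ∀ t > (0 : ℝ), f t = t ^ p * f₁ t := by
  obtain ⟨p, hp, f₁, hf₁, hf_eq⟩ := hf
  refine ⟨p, hp, fun t ↦ f₁ (max t 0),
    hf₁.comp_continuous (by fun_prop) fun t ↦ le_max_right t 0, fun t ht ↦ ?_⟩
  simp only [max_eq_left (le_of_lt ht), hf_eq t ht]

theorem continuousOn (hf : CMinusOne f) : ContinuousOn f (Ioi 0) := by
  obtain ⟨p, -, f₁, hf₁, hf_eq⟩ := hf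
  have hpow : ContinuousOn (fun t : ℝ ↦ t ^ p) (Ioi 0) :=
    continuousOn_id.rpow_const fun t ht ↦ Or.inl (ne_of_gt ht)
  exact (hpow.mul (hf₁.mono Ioi_subset_Ici_self)).congr hf_eq

theorem intervalIntegrable (hf : CMinusOne f) (ht : 0 ≤ t) :
    IntervalIntegrable f volume 0 t := by
  obtain ⟨p, hp, f₁, hf₁, hf_eq⟩ := hf
  have hmul : IntervalIntegrable (fun x ↦ x ^ p * f₁ x) volume 0 t :=
    (intervalIntegrable_rpow' hp).mul_continuousOn
      (hf₁.mono (uIcc_of_le ht ▸ Icc_subset_Ici_self))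
  refine hmul.congr_uIoo fun x hx ↦ ?_
  rw [uIoo_of_le ht] at hx
  exact (hf_eq x hx.1).symm

theorem hasDerivAt_integral (hf : CMinusOne f) (ht : 0 < t) :
    HasDerivAt (fun s ↦ ∫ τ in (0 : ℝ)..s, f τ) (f t) t :=
  integral_hasDerivAt_right (hf.intervalIntegrable ht.le)
    (hf.continuousOn.stronglyMeasurableAtFilter isOpen_Ioi t ht)
    (hf.continuousOn.continuousAt (Ioi_mem_nhds ht))

-- Each factor is singular at only one endpoint, so the two halves of `[0, t]` are treated apart.
theorem intervalIntegrable_comp_sub_mul (hf : CMinusOne f) (hg : CMinusOne g) (ht : 0 < t) :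
    IntervalIntegrable (fun τ ↦ f (t - τ) * g τ) volume 0 t := by
  have left_half := intervalIntegrable_comp_sub_mul_half hf.continuousOn ht
    (hg.intervalIntegrable (half_pos ht).le)
  have right_half := (intervalIntegrable_comp_sub_mul_half hg.continuousOn ht
    (hf.intervalIntegrable (half_pos ht).le)).comp_sub_left t
  simp only [sub_zero, sub_sub_cancel, sub_half, mul_comm (g _)] at right_half
  exact left_half.trans right_half.symm

theorem lconv (hf : CMinusOne f) (hg : CMinusOne g) : CMinusOne (lconv f g) := by
  obtain ⟨p, hp, f₁, hf₁, hf_eq⟩ := hf.exists_continuous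
  obtain ⟨q, hq, g₁, hg₁, hg_eq⟩ := hg.exists_continuous
  have hweight : IntervalIntegrable (fun u ↦ (1 - u) ^ p * u ^ q) volume 0 1 :=
    (rpow hp).intervalIntegrable_comp_sub_mul (rpow hq) one_pos
  refine ⟨p + q + 1, by linarith,
    fun t ↦ ∫ u in (0 : ℝ)..1, ((1 - u) ^ p * u ^ q) • (f₁ (t * (1 - u)) * g₁ (t * u)),
    (continuous_integral_smul_of_intervalIntegrable hweight (by fun_prop)).continuousOn,
    fun t ht ↦ ?_⟩
  have hintegrand : ∀ u ∈ Ioo (0 : ℝ) 1, f (t * (1 - u)) * g (t * u) =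
      (t ^ p * t ^ q) * (((1 - u) ^ p * u ^ q) • (f₁ (t * (1 - u)) * g₁ (t * u))) := by
    rintro u ⟨hu0, hu1⟩
    rw [← sub_pos] at hu1
    rw [hf_eq _ (mul_pos ht hu1), hg_eq _ (mul_pos ht hu0), mul_rpow (le_of_lt ht) hu1.le,
      mul_rpow (le_of_lt ht) hu0.le, smul_eq_mul]
    ring
  rw [lconv_eq_mul_integral_zero_one, integral_congr_Ioo_of_le zero_le_one hintegrand,
    intervalIntegral.integral_const_mul, rpow_add ht, rpow_add ht, rpow_one]
  ring

theorem aestronglyMeasurable_indicator (hf : CMinusOne f) :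
    AEStronglyMeasurable ((Ioi 0).indicator f) volume :=
  (aestronglyMeasurable_indicator_iff measurableSet_Ioi).2
    (hf.continuousOn.aestronglyMeasurable measurableSet_Ioi)

theorem convolutionExistsAt_indicator (hf : CMinusOne f) (hg : CMinusOne g) (t : ℝ) :
    ConvolutionExistsAt ((Ioi 0).indicator f) ((Ioi 0).indicator g) t
      (ContinuousLinearMap.mul ℝ ℝ) volume := by
  have hintegrand : (fun τ ↦ (Ioi 0).indicator f τ * (Ioi 0).indicator g (t - τ)) =
      (Ioo 0 t).indicator fun τ ↦ g (t - τ) * f τ := by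
    funext τ
    by_cases h0 : 0 < τ <;> by_cases ht : τ < t <;> simp [indicator, h0, ht, mul_comm]
  change Integrable (fun τ ↦ (Ioi 0).indicator f τ * (Ioi 0).indicator g (t - τ)) volume
  rw [hintegrand, integrable_indicator_iff measurableSet_Ioo]
  rcases le_or_gt t 0 with ht | ht
  · rw [Ioo_eq_empty_of_le ht]
    exact integrableOn_empty
  · exact (intervalIntegrable_iff_integrableOn_Ioo_of_le ht.le).1
      (hg.intervalIntegrable_comp_sub_mul hf ht)

end CMinusOne

open scoped Convolution in
theorem indicator_lconv (f g : ℝ → ℝ) :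
    (Ioi 0).indicator (lconv f g) =
      (Ioi 0).indicator f ⋆[ContinuousLinearMap.mul ℝ ℝ, volume] (Ioi 0).indicator g := by
  refine Eq.trans ?_ (posConvolution_eq_convolution_indicator f g (ContinuousLinearMap.mul ℝ ℝ))
  rw [lconv_comm]
  exact indicator_congr fun t _ ↦ by simp only [lconv, ContinuousLinearMap.mul_apply', mul_comm]

theorem lconv_assoc (hf : CMinusOne f) (hg : CMinusOne g) (hh : CMinusOne h) :
    EqOn (lconv (lconv f g) h) (lconv f (lconv g h)) (Ioi 0) := by
  intro t ht
  suffices h_indicator : (Ioi 0).indicator (lconv (lconv f g) h) t =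
      (Ioi 0).indicator (lconv f (lconv g h)) t by
    simpa only [indicator_of_mem ht] using h_indicator
  simp only [indicator_lconv]
  refine convolution_assoc _ _ _ _ (fun x y z ↦ mul_assoc x y z)
    hf.aestronglyMeasurable_indicator hg.aestronglyMeasurable_indicator
    hh.aestronglyMeasurable_indicator
    (Eventually.of_forall (hf.convolutionExistsAt_indicator hg)) ?_ ?_
  · simp only [norm_indicator_eq_indicator_norm]
    exact Eventually.of_forall (hg.norm.convolutionExistsAt_indicator hh.norm)
  · simp only [norm_indicator_eq_indicator_norm, ← indicator_lconv]
    exact hf.norm.convolutionExistsAt_indicator (hg.norm.lconv hh.norm) t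

namespace SoninPair

theorem symm (hκk : SoninPair κ k) : SoninPair k κ :=
  ⟨hκk.2.1, hκk.1, lconv_comm κ k ▸ hκk.2.2⟩

theorem lconv_lconv (hκk : SoninPair κ k) (hf : CMinusOne f) :
    EqOn (lconv κ (lconv k f)) (fun t ↦ ∫ τ in (0 : ℝ)..t, f τ) (Ioi 0) := by
  obtain ⟨hκ, hk, hone⟩ := hκk
  intro t ht
  calc lconv κ (lconv k f) t
      = lconv (lconv κ k) f t := (lconv_assoc hκ hk hf ht).symm
    _ = lconv 1 f t := lconv_congr hone (eqOn_refl f _) ht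
    _ = ∫ τ in (0 : ℝ)..t, f τ := lconv_one_left f t

theorem tendsto_lconv_lconv (hκk : SoninPair κ k) (hf : CMinusOne f) :
    Tendsto (lconv κ (lconv k f)) (nhdsWithin 0 (Ioi 0)) (nhds 0) :=
  (tendsto_integral_nhdsGT (hf.intervalIntegrable zero_le_one) one_pos).congr'
    (hκk.lconv_lconv hf).symm.eventuallyEq_nhdsWithin

theorem hasDerivAt_lconv_lconv (hκk : SoninPair κ k) (hf : CMinusOne f) (ht : 0 < t) :
    HasDerivAt (lconv κ (lconv k f)) (f t) t :=
  (hf.hasDerivAt_integral ht).congr_of_eventuallyEq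
    ((hκk.lconv_lconv hf).eventuallyEq_of_mem (Ioi_mem_nhds ht))

end SoninPair

end Convolution

/-- First fundamental theorem of FC for the GFD of Caputo type: for `(κ, k) ∈ L₁`
and `f ∈ C_{-1,(k)}(0,∞)` (i.e. `f = k * φ` with `φ ∈ C_{-1}(0,∞)`), the function
`g = κ * f` has a finite limit `g(0)` as `s → 0+`, `k * g` is differentiable on
`(0,∞)`, and `d/dt (k * g)(t) − g(0) k(t) = f(t)` for all `t > 0`, i.e.
`( *D_{(k)} I_{(κ)} f)(t) = f(t)`. -/
theorem first_fundamental_theorem_Caputo (κ k f φ : ℝ → ℝ) (hκk : SoninPair κ k)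
    (hφ : CMinusOne φ) (hfφ : ∀ t > (0:ℝ), f t = lconv k φ t) :
    ∃ g0 : ℝ, Tendsto (lconv κ f) (nhdsWithin 0 (Set.Ioi 0)) (nhds g0) ∧
      ∀ t > (0:ℝ),
        HasDerivAt (lconv k (lconv κ f)) (f t + g0 * k t) t := by
  have hf : CMinusOne f := (hκk.2.1.lconv hφ).congr hfφ
  have hg : Set.EqOn (lconv κ f) (lconv κ (lconv k φ)) (Set.Ioi 0) :=
    lconv_congr (Set.eqOn_refl κ _) hfφ
  refine ⟨0, (hκk.tendsto_lconv_lconv hφ).congr' hg.symm.eventuallyEq_nhdsWithin,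
    fun t ht ↦ ?_⟩
  rw [zero_mul, add_zero]
  exact hκk.symm.hasDerivAt_lconv_lconv hf ht
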